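/- arXiv:1811.07620 — 2 statements merged into one kernel-verified Lean document; each statement's English description precedes it below -/
import Mathlib

section
/- Let 1 < p < ∞, let I ⊂ (0,π) be an open interval, and let f : I → ℝ be a C² solution of the p-Legendre equation with f(θ)² + ḟ(θ)² > 0 for all θ ∈ I. Define u(x) = |x|·f(θ(x)) on the open cone C = {x ∈ ℝ³ : x ≠ 0, θ(x) ∈ I}. Then u is p-harmonic on C, i.e. div(|∇u(x)|^{p−2} ∇u(x)) = 0 for all x ∈ C. -/
open MeasureTheory Metric Set Real
open scoped RealInnerProductSpace

/-!
Write `r = ‖x‖` and let `ê_r`, `ê_θ` be the radial and polar unit vectors, so that `∇r = ê_r` and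
`∇θ = r⁻¹ ê_θ`. Then `u = r f(θ)` has gradient `f ê_r + ḟ ê_θ`, whose norm depends on `θ` only.
In dimension `n`, `div ê_r = (n - 1) / r` and `div ê_θ = (n - 2) cot θ / r`, so
`div (α(θ) ê_r + β(θ) ê_θ) = ((n - 1) α + β̇ + (n - 2) cot θ β) / r`. For `α = A f` and `β = A ḟ`
with `A = (f² + ḟ²)^((p - 2) / 2)` the right-hand side vanishes: this is the divergence form of
the `p`-Legendre equation, in which the cotangent term carries a factor `n - 2`.
-/

section PolarCoordinates

open InnerProductGeometry Module
open scoped Topology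

variable {E : Type*} [NormedAddCommGroup E] [InnerProductSpace ℝ E] {x : E}

section Divergence

/-- The vector field `V` is differentiable at `x` with divergence `d`. The divergence is encoded,
independently of a basis, as the trace of the derivative; it is meaningful in finite dimension
only, as `LinearMap.trace` is `0` otherwise. -/
def HasDivergenceAt (V : E → E) (d : ℝ) (x : E) : Prop :=
  DifferentiableAt ℝ V x ∧ LinearMap.trace ℝ E (fderiv ℝ V x) = d

namespace HasDivergenceAt

variable {V W : E → E} {c d : ℝ}

lemma congr_of_eventuallyEq (hV : HasDivergenceAt V d x) (h : W =ᶠ[𝓝 x] V) :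
    HasDivergenceAt W d x :=
  ⟨hV.1.congr_of_eventuallyEq h, by rw [h.fderiv_eq, hV.2]⟩

lemma congr_divergence (hV : HasDivergenceAt V c x) (h : c = d) : HasDivergenceAt V d x :=
  h ▸ hV

lemma add (hV : HasDivergenceAt V c x) (hW : HasDivergenceAt W d x) :
    HasDivergenceAt (fun y => V y + W y) (c + d) x :=
  ⟨hV.1.add hW.1, by
    rw [fderiv_fun_add hV.1 hW.1, ContinuousLinearMap.toLinearMap_add, map_add, hV.2, hW.2]⟩

lemma sub_const (hV : HasDivergenceAt V d x) (v : E) :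
    HasDivergenceAt (fun y => V y - v) d x :=
  ⟨hV.1.sub_const v, by rw [fderiv_sub_const, hV.2]⟩

lemma smul [FiniteDimensional ℝ E] (hV : HasDivergenceAt V d x) {φ : E → ℝ} {φ' : E →L[ℝ] ℝ}
    (hφ : HasFDerivAt φ φ' x) :
    HasDivergenceAt (fun y => φ y • V y) (φ x * d + φ' (V x)) x := by
  have h : HasFDerivAt (fun y => φ y • V y) (φ x • fderiv ℝ V x + φ'.smulRight (V x)) x :=
    hφ.smul hV.1.hasFDerivAt
  have htrace : LinearMap.trace ℝ E (φ'.smulRight (V x)) = φ' (V x) :=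
    LinearMap.trace_smulRight _ _
  refine ⟨h.differentiableAt, ?_⟩
  rw [h.fderiv, ContinuousLinearMap.toLinearMap_add, map_add, htrace,
    ContinuousLinearMap.toLinearMap_smul, map_smul, hV.2, smul_eq_mul]

lemma sum_fderiv_single {ι : Type*} [Fintype ι] [DecidableEq ι]
    {V : EuclideanSpace ℝ ι → EuclideanSpace ℝ ι} {x : EuclideanSpace ℝ ι}
    (hV : HasDivergenceAt V d x) :
    ∑ i, fderiv ℝ V x (EuclideanSpace.single i 1) i = d := by
  rw [← hV.2, LinearMap.trace_eq_sum_inner _ (EuclideanSpace.basisFun ι ℝ)]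
  simp only [EuclideanSpace.basisFun_apply, EuclideanSpace.inner_single_left, map_one, one_mul,
    ContinuousLinearMap.coe_coe]

end HasDivergenceAt

lemma hasDivergenceAt_id [FiniteDimensional ℝ E] (x : E) :
    HasDivergenceAt (fun y => y) (finrank ℝ E) x :=
  ⟨differentiableAt_fun_id, by
    rw [fderiv_fun_id, ContinuousLinearMap.coe_id, LinearMap.trace_id]⟩

end Divergence

section Frame

/-- The unit vector `ê_r = x / ‖x‖` of polar coordinates; it is `0` at the origin. -/
noncomputable def radialVector (x : E) : E := ‖x‖⁻¹ • x

/-- The unit vector `ê_θ` of polar coordinates with axis `e`, in the direction of increasing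
`θ = angle e x`; it is `0` where `sin θ = 0`. -/
noncomputable def polarVector (e x : E) : E :=
  (sin (angle e x))⁻¹ • (cos (angle e x) • radialVector x - e)

variable {e : E}

lemma inner_radialVector_self (hx : x ≠ 0) : ⟪radialVector x, x⟫ = ‖x‖ := by
  have hr := norm_ne_zero_iff.2 hx
  rw [radialVector, real_inner_smul_left, real_inner_self_eq_norm_sq]
  field_simp

lemma norm_radialVector (hx : x ≠ 0) : ‖radialVector x‖ = 1 :=
  norm_smul_inv_norm (𝕜 := ℝ) hx

lemma inner_radialVector_axis (he : ‖e‖ = 1) (x : E) :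
    ⟪radialVector x, e⟫ = cos (angle e x) := by
  rw [cos_angle, he, one_mul, radialVector, real_inner_smul_left, real_inner_comm, inv_mul_eq_div]

lemma inner_polarVector_radialVector (he : ‖e‖ = 1) (hx : x ≠ 0) :
    ⟪polarVector e x, radialVector x⟫ = 0 := by
  rw [polarVector, real_inner_smul_left, inner_sub_left, real_inner_smul_left,
    real_inner_self_eq_norm_sq, norm_radialVector hx, real_inner_comm, inner_radialVector_axis he]
  ring

lemma norm_polarVector (he : ‖e‖ = 1) (hx : x ≠ 0) (hθ : sin (angle e x) ≠ 0) :
    ‖polarVector e x‖ = 1 := by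
  have hsq : ‖cos (angle e x) • radialVector x - e‖ ^ 2 = sin (angle e x) ^ 2 := by
    rw [norm_sub_sq_real, norm_smul, norm_radialVector hx, he, real_inner_smul_left,
      inner_radialVector_axis he, mul_one, norm_eq_abs, sq_abs, sin_sq]
    ring
  rw [polarVector, norm_smul, norm_inv, norm_eq_abs, abs_of_nonneg (sin_angle_nonneg e x),
    (sq_eq_sq₀ (norm_nonneg _) (sin_angle_nonneg e x)).1 hsq, inv_mul_cancel₀ hθ]

lemma inner_polarVector_cos_smul_sub_axis (he : ‖e‖ = 1) (hx : x ≠ 0)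
    (hθ : sin (angle e x) ≠ 0) :
    ⟪polarVector e x, cos (angle e x) • radialVector x - e⟫ = sin (angle e x) := by
  rw [show cos (angle e x) • radialVector x - e = sin (angle e x) • polarVector e x from
    (smul_inv_smul₀ hθ _).symm, real_inner_smul_right, real_inner_self_eq_norm_sq,
    norm_polarVector he hx hθ, one_pow, mul_one]

lemma norm_smul_radialVector_add_smul_polarVector (he : ‖e‖ = 1) (hx : x ≠ 0)
    (hθ : sin (angle e x) ≠ 0) (a b : ℝ) :
    ‖a • radialVector x + b • polarVector e x‖ = √(a ^ 2 + b ^ 2) := by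
  rw [eq_comm, sqrt_eq_iff_eq_sq (by positivity) (norm_nonneg _), norm_add_sq_real,
    norm_smul, norm_smul, norm_radialVector hx, norm_polarVector he hx hθ,
    real_inner_smul_left, real_inner_smul_right, real_inner_comm,
    inner_polarVector_radialVector he hx]
  simp

end Frame

section FrameCalculus

variable {e : E}

lemma hasFDerivAt_norm_of_ne_zero (hx : x ≠ 0) :
    HasFDerivAt (fun y : E => ‖y‖) (innerSL ℝ (radialVector x)) x := by
  have hr := norm_ne_zero_iff.2 hx
  have h := (hasStrictFDerivAt_norm_sq x).hasFDerivAt.sqrt (pow_ne_zero 2 hr)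
  simp only [sqrt_sq (norm_nonneg _)] at h
  refine h.congr_fderiv ?_
  rw [radialVector, map_smul]
  match_scalars
  field_simp

lemma hasFDerivAt_inv_norm (hx : x ≠ 0) :
    HasFDerivAt (fun y : E => ‖y‖⁻¹) (-(‖x‖ ^ 2)⁻¹ • innerSL ℝ (radialVector x)) x :=
  (hasDerivAt_inv (norm_ne_zero_iff.2 hx)).comp_hasFDerivAt x (hasFDerivAt_norm_of_ne_zero hx)

lemma hasFDerivAt_cos_angle (he : ‖e‖ = 1) (hx : x ≠ 0) :
    HasFDerivAt (fun y => cos (angle e y))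
      (‖x‖⁻¹ • innerSL ℝ (e - cos (angle e x) • radialVector x)) x := by
  have hcos : ∀ y : E, cos (angle e y) = ‖y‖⁻¹ * innerSL ℝ e y := fun y => by
    rw [cos_angle, he, one_mul, innerSL_apply_apply, inv_mul_eq_div]
  simp only [hcos]
  refine ((hasFDerivAt_inv_norm hx).mul (innerSL ℝ e).hasFDerivAt).congr_fderiv ?_
  rw [map_sub, map_smul]
  module

lemma hasFDerivAt_angle (he : ‖e‖ = 1) (hx : x ≠ 0) (hθ : sin (angle e x) ≠ 0) :
    HasFDerivAt (angle e) (‖x‖⁻¹ • innerSL ℝ (polarVector e x)) x := by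
  obtain ⟨hne_one, hne_neg_one⟩ : cos (angle e x) ≠ 1 ∧ cos (angle e x) ≠ -1 :=
    not_or.1 (mt sin_eq_zero_iff_cos_eq.2 hθ)
  have harccos : ∀ y, arccos (cos (angle e y)) = angle e y := fun y =>
    arccos_cos (angle_nonneg e y) (angle_le_pi e y)
  have h := (hasDerivAt_arccos hne_neg_one hne_one).comp_hasFDerivAt x (hasFDerivAt_cos_angle he hx)
  rw [← sin_arccos, harccos] at h
  refine (h.congr_of_eventuallyEq (.of_forall fun y => (harccos y).symm)).congr_fderiv ?_
  rw [polarVector, map_smul, map_sub, map_sub]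
  module

lemma hasGradientAt_norm_mul_comp_angle [CompleteSpace E] (he : ‖e‖ = 1) (hx : x ≠ 0)
    (hθ : sin (angle e x) ≠ 0) {f : ℝ → ℝ} {f' : ℝ} (hf : HasDerivAt f f' (angle e x)) :
    HasGradientAt (fun y => ‖y‖ * f (angle e y))
      (f (angle e x) • radialVector x + f' • polarVector e x) x := by
  have hr := norm_ne_zero_iff.2 hx
  have hu := (hasFDerivAt_norm_of_ne_zero hx).mul
    (hf.comp_hasFDerivAt x (hasFDerivAt_angle he hx hθ))
  refine hasGradientAt_iff_hasFDerivAt.2 (hu.congr_fderiv ?_)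
  change _ = innerSL ℝ _
  rw [map_add, map_smul, map_smul, smul_comm f', smul_inv_smul₀ hr, add_comm]
  rfl

variable [FiniteDimensional ℝ E]

lemma hasDivergenceAt_radialVector (hx : x ≠ 0) :
    HasDivergenceAt (radialVector : E → E) ((finrank ℝ E - 1) / ‖x‖) x := by
  have hr := norm_ne_zero_iff.2 hx
  refine ((hasDivergenceAt_id x).smul (hasFDerivAt_inv_norm hx)).congr_divergence ?_
  rw [smul_apply, innerSL_apply_apply, inner_radialVector_self hx, smul_eq_mul]
  field_simp
  ring

lemma hasDivergenceAt_polarVector (he : ‖e‖ = 1) (hx : x ≠ 0) (hθ : sin (angle e x) ≠ 0) :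
    HasDivergenceAt (polarVector e)
      ((finrank ℝ E - 2) * (cos (angle e x) / sin (angle e x)) / ‖x‖) x := by
  have hr := norm_ne_zero_iff.2 hx
  have hangle := hasFDerivAt_angle he hx hθ
  have hcos := (hasDerivAt_cos (angle e x)).comp_hasFDerivAt x hangle
  have hsin_inv := ((hasDerivAt_sin (angle e x)).fun_inv hθ).comp_hasFDerivAt x hangle
  have h := (((hasDivergenceAt_radialVector hx).smul hcos).sub_const e).smul hsin_inv
  refine h.congr_divergence ?_
  simp only [smul_apply, innerSL_apply_apply, smul_eq_mul, inner_polarVector_radialVector he hx,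
    inner_polarVector_cos_smul_sub_axis he hx hθ, Function.comp_apply]
  field_simp
  ring

lemma hasDivergenceAt_smul_radialVector_add_smul_polarVector (he : ‖e‖ = 1) (hx : x ≠ 0)
    (hθ : sin (angle e x) ≠ 0) {α β : ℝ → ℝ} {α' β' : ℝ} (hα : HasDerivAt α α' (angle e x))
    (hβ : HasDerivAt β β' (angle e x)) :
    HasDivergenceAt
      (fun y => α (angle e y) • radialVector y + β (angle e y) • polarVector e y)
      (((finrank ℝ E - 1) * α (angle e x) + β' +
        (finrank ℝ E - 2) * (cos (angle e x) / sin (angle e x)) * β (angle e x)) / ‖x‖) x := by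
  have hangle := hasFDerivAt_angle he hx hθ
  have h := ((hasDivergenceAt_radialVector hx).smul (hα.comp_hasFDerivAt x hangle)).add
    ((hasDivergenceAt_polarVector he hx hθ).smul (hβ.comp_hasFDerivAt x hangle))
  refine h.congr_divergence ?_
  simp only [smul_apply, innerSL_apply_apply, smul_eq_mul, inner_polarVector_radialVector he hx,
    real_inner_self_eq_norm_sq, norm_polarVector he hx hθ, Function.comp_apply]
  ring

end FrameCalculus

lemma angle_euclideanSpace_single {ι : Type*} [Fintype ι] [DecidableEq ι] (i : ι)
    (x : EuclideanSpace ℝ ι) :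
    angle (EuclideanSpace.single i 1) x = arccos (x i / ‖x‖) := by
  rw [angle, EuclideanSpace.inner_single_left, PiLp.norm_single]
  simp

section PLegendre

lemma sq_add_sq_ne_zero_of_add_mul_sq_ne_zero {a b c : ℝ} (h : a ^ 2 + c * b ^ 2 ≠ 0) :
    a ^ 2 + b ^ 2 ≠ 0 := by
  contrapose! h
  obtain ⟨ha, hb⟩ := (add_eq_zero_iff_of_nonneg (sq_nonneg a) (sq_nonneg b)).1 h
  rw [ha, hb, mul_zero, add_zero]

lemma add_mul_sq_ne_zero_of_sq_add_sq_pos {a b c : ℝ} (hc : 0 < c) (h : 0 < a ^ 2 + b ^ 2) :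
    a ^ 2 + c * b ^ 2 ≠ 0 := by
  rcases eq_or_ne b 0 with rfl | hb
  · simpa using h.ne'
  · positivity

lemma hasDerivAt_sq_add_sq_rpow (q : ℝ) {f f' : ℝ → ℝ} {f'' θ : ℝ}
    (hf : HasDerivAt f (f' θ) θ) (hf' : HasDerivAt f' f'' θ) (hne : f θ ^ 2 + f' θ ^ 2 ≠ 0) :
    HasDerivAt (fun t => (f t ^ 2 + f' t ^ 2) ^ q)
      (2 * (f θ + f'') * f' θ * q * (f θ ^ 2 + f' θ ^ 2) ^ (q - 1)) θ := by
  have h : HasDerivAt (fun t => f t ^ 2 + f' t ^ 2) (2 * (f θ + f'') * f' θ) θ :=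
    ((hf.fun_pow 2).add (hf'.fun_pow 2)).congr_deriv (by push_cast; ring)
  exact h.rpow_const (Or.inl hne)

lemma hasDerivAt_rpow_mul_of_pLegendre {n p : ℝ} {f f' : ℝ → ℝ} {f'' θ : ℝ}
    (hf : HasDerivAt f (f' θ) θ) (hf' : HasDerivAt f' f'' θ)
    (hden : f θ ^ 2 + (p - 1) * f' θ ^ 2 ≠ 0)
    (hODE : f'' + (n - 2) * (f θ + cos θ / sin θ * f' θ) *
      ((f θ ^ 2 + f' θ ^ 2) / (f θ ^ 2 + (p - 1) * f' θ ^ 2)) + f θ = 0) :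
    HasDerivAt (fun t => (f t ^ 2 + f' t ^ 2) ^ ((p - 2) / 2) * f' t)
      (-(f θ ^ 2 + f' θ ^ 2) ^ ((p - 2) / 2) *
        ((n - 1) * f θ + (n - 2) * (cos θ / sin θ) * f' θ)) θ := by
  have hne : f θ ^ 2 + f' θ ^ 2 ≠ 0 := sq_add_sq_ne_zero_of_add_mul_sq_ne_zero hden
  have hODE_cleared : (f'' + f θ) * (f θ ^ 2 + (p - 1) * f' θ ^ 2) +
      (n - 2) * (f θ + cos θ / sin θ * f' θ) * (f θ ^ 2 + f' θ ^ 2) = 0 := by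
    linear_combination (f θ ^ 2 + (p - 1) * f' θ ^ 2) * hODE -
      (n - 2) * (f θ + cos θ / sin θ * f' θ) * div_mul_cancel₀ (f θ ^ 2 + f' θ ^ 2) hden
  have hrpow : (f θ ^ 2 + f' θ ^ 2) ^ ((p - 2) / 2) =
      (f θ ^ 2 + f' θ ^ 2) ^ ((p - 2) / 2 - 1) * (f θ ^ 2 + f' θ ^ 2) := by
    rw [rpow_sub_one hne, div_mul_cancel₀ _ hne]
  refine ((hasDerivAt_sq_add_sq_rpow _ hf hf' hne).mul hf').congr_deriv ?_
  rw [hrpow]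
  linear_combination (f θ ^ 2 + f' θ ^ 2) ^ ((p - 2) / 2 - 1) * hODE_cleared

variable [CompleteSpace E] {e : E}

/-- The flux `|∇u|^(p-2) ∇u`, whose divergence is the `p`-Laplacian of `u`. -/
noncomputable def pFlux (p : ℝ) (u : E → ℝ) (x : E) : E :=
  ‖gradient u x‖ ^ (p - 2) • gradient u x

lemma pFlux_norm_mul_comp_angle (he : ‖e‖ = 1) (hx : x ≠ 0) (hθ : sin (angle e x) ≠ 0)
    (p : ℝ) {f : ℝ → ℝ} {f' : ℝ} (hf : HasDerivAt f f' (angle e x)) :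
    pFlux p (fun y => ‖y‖ * f (angle e y)) x =
      ((f (angle e x) ^ 2 + f' ^ 2) ^ ((p - 2) / 2) * f (angle e x)) • radialVector x +
        ((f (angle e x) ^ 2 + f' ^ 2) ^ ((p - 2) / 2) * f') • polarVector e x := by
  rw [pFlux, (hasGradientAt_norm_mul_comp_angle he hx hθ hf).gradient,
    norm_smul_radialVector_add_smul_polarVector he hx hθ,
    rpow_div_two_eq_sqrt _ (by positivity), smul_add, smul_smul, smul_smul]

lemma eventuallyEq_pFlux {u v : E → ℝ} (h : u =ᶠ[𝓝 x] v) (p : ℝ) : pFlux p u =ᶠ[𝓝 x] pFlux p v := by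
  filter_upwards [h.eventuallyEq_nhds] with y hy
  rw [pFlux, pFlux, hy.gradient_eq]

theorem legendre_solution_gives_p_harmonic_general [FiniteDimensional ℝ E] (p : ℝ) (he : ‖e‖ = 1)
    {s : Set ℝ} (hs : IsOpen s) (hsπ : s ⊆ Ioo 0 π) {f f' f'' : ℝ → ℝ}
    (hf : ∀ θ ∈ s, HasDerivAt f (f' θ) θ) (hf' : ∀ θ ∈ s, HasDerivAt f' (f'' θ) θ)
    (hODE : ∀ θ ∈ s, f'' θ + (finrank ℝ E - 2) * (f θ + cos θ / sin θ * f' θ) *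
      ((f θ ^ 2 + f' θ ^ 2) / (f θ ^ 2 + (p - 1) * f' θ ^ 2)) + f θ = 0)
    (hden : ∀ θ ∈ s, f θ ^ 2 + (p - 1) * f' θ ^ 2 ≠ 0) {u : E → ℝ}
    (hu : ∀ y ≠ 0, angle e y ∈ s → u y = ‖y‖ * f (angle e y))
    (hx : x ≠ 0) (hθ : angle e x ∈ s) :
    HasDivergenceAt (pFlux p u) 0 x := by
  have hsin : ∀ θ ∈ s, sin θ ≠ 0 := fun θ h => (sin_pos_of_mem_Ioo (hsπ h)).ne'
  have hcone : ∀ᶠ y in 𝓝 x, y ≠ 0 ∧ angle e y ∈ s :=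
    (isOpen_ne.eventually_mem hx).and <|
      (hasFDerivAt_angle he hx (hsin _ hθ)).continuousAt.eventually_mem (hs.mem_nhds hθ)
  have hflux : pFlux p u =ᶠ[𝓝 x] fun y =>
      ((f (angle e y) ^ 2 + f' (angle e y) ^ 2) ^ ((p - 2) / 2) * f (angle e y)) •
        radialVector y +
      ((f (angle e y) ^ 2 + f' (angle e y) ^ 2) ^ ((p - 2) / 2) * f' (angle e y)) •
        polarVector e y := by
    filter_upwards [eventuallyEq_pFlux (hcone.mono fun y hy => hu y hy.1 hy.2) p, hcone]
      with y hpflux ⟨hy, hyθ⟩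
    rw [hpflux, pFlux_norm_mul_comp_angle he hy (hsin _ hyθ) p (hf _ hyθ)]
  have hα := (hasDerivAt_sq_add_sq_rpow ((p - 2) / 2) (hf _ hθ) (hf' _ hθ)
    (sq_add_sq_ne_zero_of_add_mul_sq_ne_zero (hden _ hθ))).mul (hf _ hθ)
  have hβ := hasDerivAt_rpow_mul_of_pLegendre (hf _ hθ) (hf' _ hθ) (hden _ hθ) (hODE _ hθ)
  refine ((hasDivergenceAt_smul_radialVector_add_smul_polarVector he hx (hsin _ hθ)
    hα hβ).congr_of_eventuallyEq hflux).congr_divergence ?_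
  rw [div_eq_zero_iff, Pi.mul_apply]
  left
  ring

end PLegendre

end PolarCoordinates

/-- If `f` is a `C²` solution of the `p`-Legendre equation on an open
interval `I ⊆ (0,π)` with `f² + ḟ² > 0` on `I`, then `u(x) = |x| f(θ(x))` is
`p`-harmonic on the cone `C = {x ≠ 0 : θ(x) ∈ I}`, i.e. `div(|∇u|^{p-2} ∇u) = 0` on `C`.
Here `θ(x) = arccos(x₃/|x|)` and the divergence is the sum of the diagonal entries of
the derivative of the vector field. -/
theorem legendre_solution_gives_p_harmonic
    (p : ℝ) (hp : 1 < p)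
    (a b : ℝ) (hI : Set.Ioo a b ⊆ Set.Ioo (0:ℝ) π)
    (f : ℝ → ℝ)
    (hf : ∀ θ ∈ Set.Ioo a b, ContDiffAt ℝ 2 f θ)
    (hODE : ∀ θ ∈ Set.Ioo a b,
      deriv (deriv f) θ + (f θ + (Real.cos θ / Real.sin θ) * deriv f θ) *
        ((f θ ^ 2 + deriv f θ ^ 2) / (f θ ^ 2 + (p - 1) * deriv f θ ^ 2)) + f θ = 0)
    (hnz : ∀ θ ∈ Set.Ioo a b, 0 < f θ ^ 2 + deriv f θ ^ 2)
    (u : EuclideanSpace ℝ (Fin 3) → ℝ)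
    (hu : ∀ x : EuclideanSpace ℝ (Fin 3), x ≠ 0 →
      u x = ‖x‖ * f (Real.arccos (x 2 / ‖x‖)))
    (W : EuclideanSpace ℝ (Fin 3) → EuclideanSpace ℝ (Fin 3))
    (hW : ∀ x, W x = ‖gradient u x‖ ^ (p - 2) • gradient u x) :
    ∀ x : EuclideanSpace ℝ (Fin 3), x ≠ 0 → Real.arccos (x 2 / ‖x‖) ∈ Set.Ioo a b →
      DifferentiableAt ℝ W x ∧
      ∑ i, fderiv ℝ W x (EuclideanSpace.single i 1) i = 0 := by
  intro x hx hθ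
  have hdim : (Module.finrank ℝ (EuclideanSpace ℝ (Fin 3)) : ℝ) - 2 = 1 := by
    rw [finrank_euclideanSpace_fin]
    norm_num
  have hderiv : ∀ θ ∈ Ioo a b, HasDerivAt f (deriv f θ) θ := fun θ h =>
    ((hf θ h).differentiableAt two_ne_zero).hasDerivAt
  have hderiv2 : ∀ θ ∈ Ioo a b, HasDerivAt (deriv f) (deriv (deriv f) θ) θ := fun θ h =>
    (((hf θ h).derivWithin one_add_one_eq_two.le).differentiableAt one_ne_zero).hasDerivAt
  have hdiv : HasDivergenceAt (pFlux p u) 0 x :=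
    legendre_solution_gives_p_harmonic_general p (e := EuclideanSpace.single 2 1)
      (by rw [PiLp.norm_single, norm_one]) isOpen_Ioo hI hderiv hderiv2
      (fun θ h => by rw [hdim, one_mul]; exact hODE θ h)
      (fun θ h => add_mul_sq_ne_zero_of_sq_add_sq_pos (sub_pos.2 hp) (hnz θ h))
      (fun y hy _ => by rw [angle_euclideanSpace_single, hu y hy])
      hx (by rwa [angle_euclideanSpace_single])
  rw [show W = pFlux p u from funext hW]
  exact ⟨hdiv.1, hdiv.sum_fderiv_single⟩
end

section
/- Let C ⊂ ℝ³ \ {0} be an open cone (i.e. tx ∈ C whenever x ∈ C and t > 0), let p ∈ ℝ, and let u : C → ℝ be a C² function that is positively homogeneous of degree 1 (u(tx) = t·u(x) for all t > 0, x ∈ C) and satisfies ∇u(x) ≠ 0 on C. Then the vector field x ↦ |∇u(x)|^{p−2} ∇(1/|x|) = −|∇u(x)|^{p−2} · x/|x|³ is divergence-free on C, i.e. div( |∇u(x)|^{p−2} ∇(1/|x|) ) = 0 for all x ∈ C. -/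
open Real

/-!
The gradient of a function that is homogeneous of degree `1` is homogeneous of degree `0`, so the
field is `x ↦ g x • x` with `g` homogeneous of degree `-n`, where `n` is the dimension. By the
product rule and Euler's identity its divergence is `Dg(x) x + n g(x) = -n g(x) + n g(x) = 0`.
-/

open Filter Module Topology

section Homogeneity

variable {E F : Type*} [NormedAddCommGroup E] [NormedSpace ℝ E]
  [NormedAddCommGroup F] [NormedSpace ℝ F]

lemma fderiv_apply_self_of_homogeneous {f : E → F} {x : E} {s : ℝ} (hf : DifferentiableAt ℝ f x)
    (hhom : ∀ t > (0 : ℝ), f (t • x) = t ^ s • f x) :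
    fderiv ℝ f x x = s • f x := by
  have hray : HasDerivAt (fun t : ℝ => t • x) x 1 := by
    simpa using (hasDerivAt_id (1 : ℝ)).smul_const x
  have hchain : HasDerivAt (fun t : ℝ => f (t • x)) (fderiv ℝ f x x) 1 :=
    HasFDerivAt.comp_hasDerivAt (1 : ℝ) (by simpa using hf.hasFDerivAt) hray
  have hpow : HasDerivAt (fun t : ℝ => t ^ s • f x) (s • f x) 1 := by
    simpa using (hasDerivAt_rpow_const (p := s) (Or.inl one_ne_zero)).smul_const (f x)
  refine hchain.unique (hpow.congr_of_eventuallyEq ?_)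
  filter_upwards [lt_mem_nhds one_pos] with t ht using hhom t ht

end Homogeneity

section Gradient

variable {E : Type*} [NormedAddCommGroup E] [InnerProductSpace ℝ E] [CompleteSpace E]
  {u : E → ℝ} {x : E}

lemma gradient_smul_of_homogeneous {t : ℝ} (ht : t ≠ 0)
    (hhom : ∀ᶠ y in 𝓝 x, u (t • y) = t * u y) :
    gradient u (t • x) = gradient u x := by
  have hfderiv : t • fderiv ℝ u (t • x) = t • fderiv ℝ u x := by
    have h : fderiv ℝ (fun y => u (t • y)) x = fderiv ℝ (t • u) x := EventuallyEq.fderiv_eq hhom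
    rwa [fderiv_comp_smul, fderiv_const_smul_field] at h
  simp only [gradient, smul_right_injective _ ht hfderiv]

lemma differentiableAt_gradient_of_contDiffAt (hu : ContDiffAt ℝ 2 u x) :
    DifferentiableAt ℝ (gradient u) x := by
  have hfderiv : DifferentiableAt ℝ (fderiv ℝ u) x :=
    (hu.fderiv_right (m := 1) (by norm_num)).differentiableAt one_ne_zero
  exact (InnerProductSpace.toDual ℝ E).symm.differentiableAt.comp x hfderiv

end Gradient

section Divergence

variable {E : Type*} [NormedAddCommGroup E] [NormedSpace ℝ E]

/-- The divergence of a vector field `W` at `x`, defined without coordinates as the trace of the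
derivative. It is `0` by convention where `W` is not differentiable. -/
noncomputable def divergence (W : E → E) (x : E) : ℝ :=
  LinearMap.trace ℝ E (fderiv ℝ W x)

lemma divergence_eq_sum_single {ι : Type*} [Fintype ι] [DecidableEq ι]
    (W : EuclideanSpace ℝ ι → EuclideanSpace ℝ ι) (x : EuclideanSpace ℝ ι) :
    divergence W x = ∑ i, fderiv ℝ W x (EuclideanSpace.single i 1) i := by
  simp [divergence, LinearMap.trace_eq_sum_inner _ (EuclideanSpace.basisFun ι ℝ),
    EuclideanSpace.inner_single_left]

variable [FiniteDimensional ℝ E]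

lemma divergence_smul_self {g : E → ℝ} {x : E} (hg : DifferentiableAt ℝ g x) :
    divergence (fun y => g y • y) x = fderiv ℝ g x x + finrank ℝ E * g x := by
  simp [divergence, fderiv_fun_smul hg differentiableAt_fun_id, LinearMap.trace_smulRight,
    mul_comm, add_comm]

lemma divergence_smul_self_of_homogeneous {g : E → ℝ} {x : E} {s : ℝ}
    (hg : DifferentiableAt ℝ g x) (hhom : ∀ t > (0 : ℝ), g (t • x) = t ^ s * g x) :
    divergence (fun y => g y • y) x = (s + finrank ℝ E) * g x := by
  rw [divergence_smul_self hg, fderiv_apply_self_of_homogeneous hg hhom, smul_eq_mul, add_mul]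

end Divergence

section RadialField

variable {E : Type*} [NormedAddCommGroup E] [InnerProductSpace ℝ E] {a : E → ℝ} {x : E}

lemma differentiableAt_div_norm_pow (ha : DifferentiableAt ℝ a x) (hx : x ≠ 0) (n : ℕ) :
    DifferentiableAt ℝ (fun y => a y / ‖y‖ ^ n) x :=
  ha.fun_mul <| ((differentiableAt_fun_id.norm ℝ hx).fun_pow n).fun_inv <|
    pow_ne_zero n (norm_ne_zero_iff.2 hx)

lemma divergence_div_norm_pow_finrank_smul_self_eq_zero [FiniteDimensional ℝ E]
    (ha : DifferentiableAt ℝ a x) (hx : x ≠ 0) (hhom : ∀ t > (0 : ℝ), a (t • x) = a x) :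
    divergence (fun y => (a y / ‖y‖ ^ finrank ℝ E) • y) x = 0 := by
  have hdegree : ∀ t > (0 : ℝ), a (t • x) / ‖t • x‖ ^ finrank ℝ E =
      t ^ (-finrank ℝ E : ℝ) * (a x / ‖x‖ ^ finrank ℝ E) := fun t ht => by
    rw [hhom t ht, norm_smul, norm_of_nonneg ht.le, rpow_neg ht.le, rpow_natCast]
    field
  rw [divergence_smul_self_of_homogeneous (differentiableAt_div_norm_pow ha hx _) hdegree,
    neg_add_cancel, zero_mul]

end RadialField

theorem homogeneous_weight_times_fundamental_gradient_divergence_free_general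
    {E : Type*} [NormedAddCommGroup E] [InnerProductSpace ℝ E] [FiniteDimensional ℝ E]
    {C : Set E} (hCopen : IsOpen C) (hC0 : (0 : E) ∉ C)
    {u : E → ℝ} (hu : ContDiffOn ℝ 2 u C)
    (hhom : ∀ x ∈ C, ∀ t > (0 : ℝ), u (t • x) = t * u x)
    {φ : E → ℝ} (hφ : ∀ x ∈ C, DifferentiableAt ℝ φ (gradient u x)) :
    ∀ x ∈ C, DifferentiableAt ℝ (fun y => (φ (gradient u y) / ‖y‖ ^ finrank ℝ E) • y) x ∧
      divergence (fun y => (φ (gradient u y) / ‖y‖ ^ finrank ℝ E) • y) x = 0 := by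
  intro x hx
  have hC : C ∈ 𝓝 x := hCopen.mem_nhds hx
  have hx0 : x ≠ 0 := ne_of_mem_of_not_mem hx hC0
  have hweight : DifferentiableAt ℝ (fun y => φ (gradient u y)) x :=
    (hφ x hx).comp x (differentiableAt_gradient_of_contDiffAt (hu.contDiffAt hC))
  have hweight_hom : ∀ t > (0 : ℝ), φ (gradient u (t • x)) = φ (gradient u x) := fun t ht => by
    rw [gradient_smul_of_homogeneous ht.ne' (eventually_of_mem hC fun y hy => hhom y hy t ht)]
  exact ⟨(differentiableAt_div_norm_pow hweight hx0 _).fun_smul differentiableAt_fun_id,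
    divergence_div_norm_pow_finrank_smul_self_eq_zero hweight hx0 hweight_hom⟩

/-- Let `C ⊆ ℝ³ \ {0}` be an open cone, `p ∈ ℝ`, and `u : C → ℝ` a `C²`
function, positively homogeneous of degree 1, with `∇u ≠ 0` on `C`.  Then the vector
field `x ↦ |∇u(x)|^{p-2} ∇(1/|x|) = -(|∇u(x)|^{p-2}/|x|³) • x` is divergence-free on `C`.
The divergence is the sum of the diagonal entries of the derivative of the field. -/
theorem homogeneous_weight_times_fundamental_gradient_divergence_free
    (p : ℝ)
    (C : Set (EuclideanSpace ℝ (Fin 3)))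
    (hCopen : IsOpen C) (hC0 : (0 : EuclideanSpace ℝ (Fin 3)) ∉ C)
    (hCcone : ∀ x ∈ C, ∀ t > (0:ℝ), t • x ∈ C)
    (u : EuclideanSpace ℝ (Fin 3) → ℝ)
    (hu : ContDiffOn ℝ 2 u C)
    (hhom : ∀ x ∈ C, ∀ t > (0:ℝ), u (t • x) = t * u x)
    (hgrad : ∀ x ∈ C, gradient u x ≠ 0)
    (W : EuclideanSpace ℝ (Fin 3) → EuclideanSpace ℝ (Fin 3))
    (hW : ∀ x, W x = -(‖gradient u x‖ ^ (p - 2) / ‖x‖ ^ 3) • x) :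
    ∀ x ∈ C, DifferentiableAt ℝ W x ∧
      ∑ i, fderiv ℝ W x (EuclideanSpace.single i 1) i = 0 := by
  obtain rfl : W = fun x => (-‖gradient u x‖ ^ (p - 2) / ‖x‖ ^ 3) • x :=
    funext fun x => by rw [hW, neg_div]
  have hweight : ∀ x ∈ C, DifferentiableAt ℝ (fun v => -‖v‖ ^ (p - 2)) (gradient u x) := fun x hx =>
    ((differentiableAt_fun_id.norm ℝ (hgrad x hx)).rpow_const (by simp [hgrad x hx])).fun_neg
  simpa [divergence_eq_sum_single] using
    homogeneous_weight_times_fundamental_gradient_divergence_free_general hCopen hC0 hu hhom hweight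
end
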